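/- Let $U:(0,\infty)\to(0,\infty)$ be measurable and such that, for some $\kappa\in\mathbb{R}$, the function $x\mapsto x^{\kappa}U(x)$ is locally bounded on $[0,\infty)$, that is, bounded on $(0,b]$ for every $b>0$ (for $\kappa=0$ this says that $U$ itself is locally bounded on $[0,\infty)$). Suppose that $U(x)\sim x^{\beta}\ell(x)$ as $x\to\infty$ for some $\beta\in\mathbb{R}$ and some function $\ell:(0,\infty)\to(0,\infty)$ slowly varying at infinity, i.e. $\ell(ct)/\ell(t)\to1$ as $t\to\infty$ for every $c>0$. Let $q$ be a function, defined and positive in a neighbourhood of infinity, with $q(t)\to\infty$ and $q(t)/t\to0$ as $t\to\infty$. Then the integral below converges for all sufficiently large $t$ and, as $t\to\infty$, $$\int_0^\infty y^{q(t)-1}e^{-y}\,U(t/y)\,\mathrm{d}y\;\sim\;\Gamma(q(t))\,U(t/q(t)),$$ where $\Gamma$ is the Gamma function and $f(t)\sim g(t)$ means $f(t)/g(t)\to1$. -/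

import Mathlib

open Filter Topology MeasureTheory Set

/-- `ℓ : (0,∞) → (0,∞)` is slowly varying at infinity. Only the values of `ℓ` on `(0,∞)` matter. -/
structure SlowlyVaryingAtTop (ℓ : ℝ → ℝ) : Prop where
  pos : ∀ x : ℝ, 0 < x → 0 < ℓ x
  tendsto_ratio : ∀ c : ℝ, 0 < c → Tendsto (fun t => ℓ (c * t) / ℓ t) atTop (𝓝 1)

/-- The class `𝒬` of functions, positive in a neighbourhood of infinity, with `q(t) → ∞` and
`q(t) = o(t)` as `t → ∞`. -/
structure ClassQ (q : ℝ → ℝ) : Prop where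
  eventually_pos : ∀ᶠ t in atTop, 0 < q t
  tendsto_atTop : Tendsto q atTop atTop
  tendsto_div : Tendsto (fun t => q t / t) atTop (𝓝 0)

/-- A function on `(0,∞)` is locally bounded on `[0,∞)`: it is bounded on `(0,b]` for all `b`. -/
def LocallyBoundedFromZero (f : ℝ → ℝ) : Prop :=
  ∀ b : ℝ, 0 < b → ∃ C : ℝ, ∀ x ∈ Ioc 0 b, |f x| ≤ C

/-!
The substitution `y = q v` turns the ratio of the two sides into the mean of `U (s / v) / U s`,
where `s = t / q`, under the gamma law with shape and rate `q`. That law concentrates at `v = 1` as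
`q → ∞`: since `Γ (q + k) ∼ Γ q * q ^ k` for every integer `k`, its moments of all integer orders
tend to `1`, so the integral of `(v - 1) ^ 2 * (v ^ N + v ^ (-N))` tends to `0`.

Near `v = 1` the integrand tends to `1` by the uniform convergence theorem for regularly varying
functions. At distance at least `δ` from `1`, Potter's bounds (for `s / v` large) and the local
boundedness (for `s / v` bounded) dominate it by a multiple of `v ^ N + v ^ (-N)`, which is at most
`δ ^ (-2) * (v - 1) ^ 2 * (v ^ N + v ^ (-N))`.
-/

section UniformConvergence

variable {E : Type*} [NormedAddCommGroup E] {h : ℝ → E}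

theorem min_one_norm_sub_le (a b : E) : min 1 ‖a - b‖ ≤ min 1 ‖a‖ + min 1 ‖b‖ := by
  have := norm_sub_le a b
  have := norm_nonneg a
  have := norm_nonneg b
  grind

theorem intervalIntegrable_min_one_norm {g : ℝ → E} (hg : StronglyMeasurable g) (a b : ℝ) :
    IntervalIntegrable (fun z => min 1 ‖g z‖) volume a b := by
  refine (intervalIntegrable_const (c := (1 : ℝ))).mono_fun
    (measurable_const.min hg.norm.measurable).aestronglyMeasurable
    (Eventually.of_forall fun z => ?_)
  simp only [norm_one, Real.norm_of_nonneg (by positivity : 0 ≤ min 1 ‖g z‖), min_le_left]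

/-- The integral over `z ∈ [-a, a + 1]` of the increment `h (x + z) - h x`, truncated in norm at
`1`. The truncation makes it converge to `0` as soon as the increments do so for each `z`. -/
noncomputable def truncatedOscillation (h : ℝ → E) (a x : ℝ) : ℝ :=
  ∫ z in -a..a + 1, min 1 ‖h (x + z) - h x‖

theorem stronglyMeasurable_comp_add_sub_const (hm : StronglyMeasurable h) (x : ℝ) (c : E) :
    StronglyMeasurable fun z => h (x + z) - c :=
  (hm.comp_measurable (measurable_const_add x)).sub stronglyMeasurable_const

theorem tendsto_truncatedOscillation (hm : StronglyMeasurable h)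
    (hh : ∀ u : ℝ, Tendsto (fun x => h (x + u) - h x) atTop (𝓝 0)) (a : ℝ) :
    Tendsto (truncatedOscillation h a) atTop (𝓝 0) := by
  rw [← intervalIntegral.integral_zero (a := -a) (b := a + 1) (μ := volume) (E := ℝ)]
  refine intervalIntegral.tendsto_integral_filter_of_dominated_convergence (fun _ => 1)
    (Eventually.of_forall fun x => ?_) (Eventually.of_forall fun x => ?_)
    intervalIntegrable_const (Eventually.of_forall fun z _ => ?_)
  · exact (measurable_const.min
      (stronglyMeasurable_comp_add_sub_const hm x _).norm.measurable).aestronglyMeasurable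
  · refine Eventually.of_forall fun z _ => ?_
    rw [Real.norm_of_nonneg (by positivity)]
    exact min_le_left _ _
  · simpa using (tendsto_const_nhds (x := (1 : ℝ))).min (hh z).norm

theorem integral_min_one_norm_le_truncatedOscillation (hm : StronglyMeasurable h) {a b c : ℝ}
    (hab : -a ≤ b) (hbc : b ≤ c) (hca : c ≤ a + 1) (x : ℝ) :
    ∫ z in b..c, min 1 ‖h (x + z) - h x‖ ≤ truncatedOscillation h a x :=
  intervalIntegral.integral_mono_interval hab hbc hca
    (Eventually.of_forall fun z => by positivity)
    (intervalIntegrable_min_one_norm (stronglyMeasurable_comp_add_sub_const hm x _) _ _)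

-- Average over `z ∈ [0, 1]` the triangle inequality through the point `x + z`.
theorem min_one_norm_sub_le_truncatedOscillation_add (hm : StronglyMeasurable h) {a u : ℝ}
    (hu : u ∈ Icc (-a) a) (x : ℝ) :
    min 1 ‖h (x + u) - h x‖ ≤ truncatedOscillation h a x + truncatedOscillation h a (x + u) := by
  have integrable (c : E) :
      IntervalIntegrable (fun z => min 1 ‖h (x + z) - c‖) volume 0 1 :=
    intervalIntegrable_min_one_norm (stronglyMeasurable_comp_add_sub_const hm x c) 0 1
  have average_le : min 1 ‖h (x + u) - h x‖ ≤ (∫ z in (0 : ℝ)..1, min 1 ‖h (x + z) - h x‖)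
      + ∫ z in (0 : ℝ)..1, min 1 ‖h (x + z) - h (x + u)‖ := by
    rw [← intervalIntegral.integral_add (integrable _) (integrable _)]
    calc min 1 ‖h (x + u) - h x‖ = ∫ _z in (0 : ℝ)..1, min 1 ‖h (x + u) - h x‖ := by simp
      _ ≤ _ := intervalIntegral.integral_mono_on zero_le_one intervalIntegrable_const
        ((integrable _).add (integrable _)) fun z _ => by
          simpa using min_one_norm_sub_le (h (x + z) - h x) (h (x + z) - h (x + u))
  have translate : ∫ z in (0 : ℝ)..1, min 1 ‖h (x + z) - h (x + u)‖
      = ∫ w in -u..1 - u, min 1 ‖h (x + u + w) - h (x + u)‖ := by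
    rw [← zero_sub, ← intervalIntegral.integral_comp_sub_right
      (fun w => min 1 ‖h (x + u + w) - h (x + u)‖) u]
    simp only [add_assoc, add_sub_cancel]
  refine average_le.trans (add_le_add ?_ (translate.trans_le ?_)) <;>
    refine integral_min_one_norm_le_truncatedOscillation hm ?_ ?_ ?_ _ <;>
    linarith [hu.1, hu.2]

theorem tendstoUniformlyOn_add_sub_of_tendsto (hm : StronglyMeasurable h)
    (hh : ∀ u : ℝ, Tendsto (fun x => h (x + u) - h x) atTop (𝓝 0)) {K : Set ℝ}
    (hK : Bornology.IsBounded K) :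
    TendstoUniformlyOn (fun x u => h (x + u) - h x) 0 atTop K := by
  obtain ⟨a, hKa⟩ := hK.subset_closedBall 0
  rw [Real.closedBall_eq_Icc, zero_sub, zero_add] at hKa
  rw [Metric.tendstoUniformlyOn_iff]
  intro ε hε
  have hη : 0 < min ε 1 / 2 := by positivity
  obtain ⟨X, hX⟩ := eventually_atTop.1
    ((tendsto_truncatedOscillation hm hh a).eventually (gt_mem_nhds hη))
  filter_upwards [eventually_ge_atTop X, eventually_ge_atTop (X + a)] with x hx hxa u hu
  have hua := hKa hu
  have small : min 1 ‖h (x + u) - h x‖ < min ε 1 := by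
    linarith [min_one_norm_sub_le_truncatedOscillation_add hm hua x, hX x hx,
      hX (x + u) (by linarith [hua.1])]
  rw [Pi.zero_apply, dist_zero_left]
  grind

theorem norm_sub_le_mul_abs_sub_add_one {ε X : ℝ}
    (hX : ∀ x ≥ X, ∀ u ∈ Icc (0 : ℝ) 1, ‖h (x + u) - h x‖ ≤ ε) {x y : ℝ} (hx : X ≤ x)
    (hy : X ≤ y) : ‖h y - h x‖ ≤ ε * (|y - x| + 1) := by
  have hε : 0 ≤ ε := (norm_nonneg _).trans (hX X le_rfl 0 (by simp))
  have chain (n : ℕ) : ∀ x y, X ≤ x → x ≤ y → y ≤ x + n → ‖h y - h x‖ ≤ ε * n := by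
    induction n with
    | zero =>
      intro x y _ hxy hyx
      simp [le_antisymm hxy (by simpa using hyx)]
    | succ n ih =>
      intro x y hx hxy hyx
      push_cast at hyx ⊢
      set z := max x (y - 1)
      have hzy : z ≤ y := max_le hxy (by linarith)
      have first := ih x z hx (le_max_left _ _)
        (max_le (by linarith [n.cast_nonneg (α := ℝ)]) (by linarith))
      have last := hX z (hx.trans (le_max_left _ _)) (y - z)
        ⟨by linarith, by linarith [le_max_right x (y - 1)]⟩
      rw [add_sub_cancel] at last
      linarith [norm_sub_le_norm_sub_add_norm_sub (h y) (h z) (h x)]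
  wlog hxy : x ≤ y generalizing x y
  · rw [norm_sub_rev, abs_sub_comm]
    exact this hy hx (le_of_not_ge hxy)
  · rw [abs_of_nonneg (sub_nonneg.2 hxy)]
    refine (chain ⌈y - x⌉₊ x y hx hxy (by linarith [Nat.le_ceil (y - x)])).trans ?_
    gcongr
    exact (Nat.ceil_lt_add_one (sub_nonneg.2 hxy)).le

end UniformConvergence

section RegularVariation

/-- `f` is regularly varying at infinity with index `ρ`. Only the values of `f` near infinity
matter. -/
structure RegularlyVaryingAtTop (f : ℝ → ℝ) (ρ : ℝ) : Prop where
  eventually_pos : ∀ᶠ x in atTop, 0 < f x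
  tendsto_ratio : ∀ c : ℝ, 0 < c → Tendsto (fun x => f (c * x) / f x) atTop (𝓝 (c ^ ρ))

theorem SlowlyVaryingAtTop.regularlyVaryingAtTop_of_tendsto_div {f ℓ : ℝ → ℝ} {ρ : ℝ}
    (hℓ : SlowlyVaryingAtTop ℓ) (hf : Tendsto (fun x => f x / (x ^ ρ * ℓ x)) atTop (𝓝 1)) :
    RegularlyVaryingAtTop f ρ where
  eventually_pos := by
    filter_upwards [hf.eventually (lt_mem_nhds one_pos), eventually_gt_atTop 0] with x hfx hx
    exact (div_pos_iff_of_pos_right (mul_pos (Real.rpow_pos_of_pos hx ρ) (hℓ.pos x hx))).1 hfx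
  tendsto_ratio c hc := by
    have lim := (((hf.comp (tendsto_id.const_mul_atTop hc)).div hf one_ne_zero).mul
      (hℓ.tendsto_ratio c hc)).const_mul (c ^ ρ)
    rw [div_one, mul_one, mul_one] at lim
    refine lim.congr' ?_
    filter_upwards [eventually_gt_atTop 0] with x hx
    have := hℓ.pos x hx
    have := hℓ.pos (c * x) (mul_pos hc hx)
    have := Real.rpow_pos_of_pos hx ρ
    have := Real.rpow_pos_of_pos hc ρ
    simp only [Function.comp_apply, Pi.div_apply, id_eq, Real.mul_rpow hc.le hx.le]
    field_simp

/-- The logarithm of `f x / x ^ ρ` as a function of `log x`. It turns regular variation of `f` with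
index `ρ` into decay of the increments at infinity. -/
noncomputable def logSlowPart (f : ℝ → ℝ) (ρ x : ℝ) : ℝ :=
  Real.log (f (Real.exp x)) - ρ * x

variable {f : ℝ → ℝ} {ρ κ : ℝ}

theorem div_eq_exp_logSlowPart_sub {x y : ℝ} (hx : 0 < x) (hy : 0 < y) (hfx : 0 < f x)
    (hfy : 0 < f y) :
    f y / f x = Real.exp (logSlowPart f ρ (Real.log y) - logSlowPart f ρ (Real.log x))
      * (y / x) ^ ρ := by
  rw [Real.rpow_def_of_pos (div_pos hy hx), ← Real.exp_add, ← Real.exp_log (div_pos hfy hfx),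
    Real.log_div hfy.ne' hfx.ne', Real.log_div hy.ne' hx.ne']
  simp only [logSlowPart, Real.exp_log hx, Real.exp_log hy]
  ring_nf

theorem measurable_comp_exp (hm : Measurable fun x : Ioi (0 : ℝ) => f x) :
    Measurable fun x => f (Real.exp x) :=
  hm.comp (Real.measurable_exp.subtype_mk (h := Real.exp_pos))

theorem stronglyMeasurable_logSlowPart (hm : Measurable fun x : Ioi (0 : ℝ) => f x) :
    StronglyMeasurable (logSlowPart f ρ) :=
  ((Real.measurable_log.comp (measurable_comp_exp hm)).sub
    (measurable_id.const_mul ρ)).stronglyMeasurable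

namespace RegularlyVaryingAtTop

theorem tendsto_logSlowPart_add_sub (hf : RegularlyVaryingAtTop f ρ) (u : ℝ) :
    Tendsto (fun x => logSlowPart f ρ (x + u) - logSlowPart f ρ x) atTop (𝓝 0) := by
  have lim := (((hf.tendsto_ratio _ (Real.exp_pos u)).comp Real.tendsto_exp_atTop).log
    (by positivity)).sub_const (ρ * u)
  rw [Real.log_rpow (Real.exp_pos u), Real.log_exp, sub_self] at lim
  have pos := Real.tendsto_exp_atTop.eventually hf.eventually_pos
  refine lim.congr' ?_
  filter_upwards [pos, (tendsto_atTop_add_const_right _ u tendsto_id).eventually pos]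
    with x hx hxu
  simp only [Function.comp_apply, logSlowPart]
  rw [id_eq] at hxu
  rw [← Real.exp_add, add_comm u x, Real.log_div hxu.ne' hx.ne']
  ring

theorem tendstoUniformlyOn_logSlowPart (hf : RegularlyVaryingAtTop f ρ)
    (hm : Measurable fun x : Ioi (0 : ℝ) => f x) {K : Set ℝ} (hK : Bornology.IsBounded K) :
    TendstoUniformlyOn (fun x u => logSlowPart f ρ (x + u) - logSlowPart f ρ x) 0 atTop K :=
  tendstoUniformlyOn_add_sub_of_tendsto (stronglyMeasurable_logSlowPart hm)
    hf.tendsto_logSlowPart_add_sub hK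

theorem tendsto_ratio_prod (hf : RegularlyVaryingAtTop f ρ)
    (hm : Measurable fun x : Ioi (0 : ℝ) => f x) {c : ℝ} (hc : 0 < c) :
    Tendsto (fun p : ℝ × ℝ => f (p.2 * p.1) / f p.1) (atTop ×ˢ 𝓝 c) (𝓝 (c ^ ρ)) := by
  have increments : Tendsto (fun p : ℝ × ℝ => logSlowPart f ρ (p.1 + p.2) - logSlowPart f ρ p.1)
      (atTop ×ˢ 𝓝 (Real.log c)) (𝓝 0) := by
    have unif := (tendstoUniformlyOn_iff_tendstoUniformlyOnFilter.1
      (hf.tendstoUniformlyOn_logSlowPart hm (Metric.isBounded_closedBall (x := Real.log c)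
        (r := 1)))).mono_right (le_principal_iff.2 (Metric.closedBall_mem_nhds _ one_pos))
    exact Uniform.tendsto_nhds_right.2 unif
  have log_map : Tendsto (fun p : ℝ × ℝ => (Real.log p.1, Real.log p.2)) (atTop ×ˢ 𝓝 c)
      (atTop ×ˢ 𝓝 (Real.log c)) :=
    Real.tendsto_log_atTop.prodMap (Real.continuousAt_log hc.ne')
  have lim := ((Real.continuous_exp.tendsto 0).comp (increments.comp log_map)).mul
    ((Real.continuousAt_rpow_const c ρ (Or.inl hc.ne')).tendsto.comp tendsto_snd)
  rw [Real.exp_zero, one_mul] at lim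
  refine lim.congr' ?_
  have mul_atTop : Tendsto (fun p : ℝ × ℝ => p.2 * p.1) (atTop ×ˢ 𝓝 c) atTop :=
    Tendsto.pos_mul_atTop hc tendsto_snd tendsto_fst
  filter_upwards [tendsto_fst.eventually hf.eventually_pos,
    tendsto_fst.eventually (eventually_gt_atTop 0), tendsto_snd.eventually (lt_mem_nhds hc),
    mul_atTop.eventually hf.eventually_pos] with p hfx hx hv hfvx
  rw [div_eq_exp_logSlowPart_sub (ρ := ρ) hx (mul_pos hv hx) hfx hfvx,
    Real.log_mul hv.ne' hx.ne', mul_div_cancel_right₀ _ hx.ne', add_comm (Real.log p.2)]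
  rfl

theorem eventually_potter_bound (hf : RegularlyVaryingAtTop f ρ)
    (hm : Measurable fun x : Ioi (0 : ℝ) => f x) {ε : ℝ} (hε : 0 < ε) :
    ∀ᶠ X in atTop, ∀ x ≥ X, ∀ y ≥ X,
      f y ≤ Real.exp (ε * (|Real.log (y / x)| + 1)) * (y / x) ^ ρ * f x := by
  have unif := Metric.tendstoUniformlyOn_iff.1
    (hf.tendstoUniformlyOn_logSlowPart hm (Metric.isBounded_Icc 0 1)) ε hε
  filter_upwards [Real.tendsto_log_atTop.eventually (eventually_forall_ge_atTop.2 unif),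
    eventually_forall_ge_atTop.2 hf.eventually_pos, eventually_gt_atTop 0]
    with X hX hpos hX0 x hx y hy
  have hx0 := hX0.trans_le hx
  have hy0 := hX0.trans_le hy
  have growth : logSlowPart f ρ (Real.log y) - logSlowPart f ρ (Real.log x)
      ≤ ε * (|Real.log (y / x)| + 1) := by
    rw [Real.log_div hy0.ne' hx0.ne']
    refine (le_abs_self _).trans (norm_sub_le_mul_abs_sub_add_one (E := ℝ) (fun z hz u hu => ?_)
      (Real.log_le_log hX0 hx) (Real.log_le_log hX0 hy))
    simpa only [Pi.zero_apply, dist_zero_left] using (hX z hz u hu).le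
  rw [← div_le_iff₀ (hpos x hx),
    div_eq_exp_logSlowPart_sub (ρ := ρ) hx0 hy0 (hpos x hx) (hpos y hy)]
  gcongr

end RegularlyVaryingAtTop

theorem rpow_le_exp_abs_mul_abs_log {v : ℝ} (hv : 0 < v) (a : ℝ) :
    v ^ a ≤ Real.exp (|a| * |Real.log v|) := by
  rw [Real.rpow_def_of_pos hv, ← abs_mul, mul_comm]
  exact Real.exp_le_exp.2 (le_abs_self _)

theorem abs_log_div_le_abs_log_div {x x' z' z : ℝ} (hx : 0 < x) (hxx' : x ≤ x') (hxz' : x' ≤ z')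
    (hzz' : z' ≤ z) : |Real.log (x' / z')| ≤ |Real.log (x / z)| := by
  have hx' := hx.trans_le hxx'
  have hz' := hx'.trans_le hxz'
  have quot_le : x / z ≤ x' / z' := by gcongr
  have log_quot_le := Real.log_le_log (div_pos hx (hz'.trans_le hzz')) quot_le
  have log_nonpos := Real.log_nonpos (by positivity) ((div_le_one hz').2 hxz')
  rw [abs_of_nonpos log_nonpos, abs_of_nonpos (log_quot_le.trans log_nonpos)]
  exact neg_le_neg log_quot_le

theorem LocallyBoundedFromZero.exists_abs_le_mul_exp
    (hf : LocallyBoundedFromZero fun x => x ^ κ * f x) {X : ℝ} (hX : 0 < X) :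
    ∃ C, 0 ≤ C ∧ ∀ y ∈ Ioc 0 X, |f y| ≤ C * Real.exp (|κ| * |Real.log (y / X)|) := by
  obtain ⟨C, hC⟩ := hf X hX
  have hC0 : 0 ≤ C := (abs_nonneg _).trans (hC X ⟨hX, le_rfl⟩)
  refine ⟨C * X ^ (-κ), by positivity, fun y hy => ?_⟩
  have hy0 : 0 < y := hy.1
  calc |f y| = y ^ (-κ) * |y ^ κ * f y| := by
        rw [abs_mul, abs_of_pos (Real.rpow_pos_of_pos hy0 κ), ← mul_assoc, ← Real.rpow_add hy0,
          neg_add_cancel, Real.rpow_zero, one_mul]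
    _ ≤ y ^ (-κ) * C := by gcongr; exact hC y hy
    _ = C * X ^ (-κ) * (y / X) ^ (-κ) := by
        rw [mul_assoc, ← Real.mul_rpow hX.le (by positivity), mul_div_cancel₀ _ hX.ne', mul_comm]
    _ ≤ _ := by
        gcongr
        simpa using rpow_le_exp_abs_mul_abs_log (div_pos hy0 hX) (-κ)

theorem RegularlyVaryingAtTop.eventually_le_exp_mul_abs_log_mul (hf : RegularlyVaryingAtTop f ρ)
    (hm : Measurable fun x : Ioi (0 : ℝ) => f x) {ε : ℝ} (hε : 0 < ε) :
    ∀ᶠ X in atTop, ∀ x ≥ X, ∀ y ≥ X,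
      f y ≤ Real.exp ε * Real.exp ((ε + |ρ|) * |Real.log (y / x)|) * f x := by
  filter_upwards [hf.eventually_potter_bound hm hε,
    eventually_forall_ge_atTop.2 hf.eventually_pos, eventually_gt_atTop 0]
    with X potter hpos hX x hx y hy
  have := hpos x hx
  calc f y ≤ Real.exp (ε * (|Real.log (y / x)| + 1)) * (y / x) ^ ρ * f x := potter x hx y hy
    _ ≤ Real.exp (ε * (|Real.log (y / x)| + 1)) * Real.exp (|ρ| * |Real.log (y / x)|) * f x := by
      gcongr
      exact rpow_le_exp_abs_mul_abs_log (div_pos (hX.trans_le hy) (hX.trans_le hx)) ρ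
    _ = _ := by simp only [← Real.exp_add]; ring_nf

theorem RegularlyVaryingAtTop.exists_abs_le_mul_exp_mul (hf : RegularlyVaryingAtTop f ρ)
    (hm : Measurable fun x : Ioi (0 : ℝ) => f x)
    (hbdd : LocallyBoundedFromZero fun x => x ^ κ * f x) :
    ∃ C a, ∀ᶠ x in atTop, ∀ y, 0 < y → |f y| ≤ C * Real.exp (a * |Real.log (y / x)|) * f x := by
  obtain ⟨X, large, hpos, hX⟩ := ((hf.eventually_le_exp_mul_abs_log_mul hm one_pos).and
    ((eventually_forall_ge_atTop.2 hf.eventually_pos).and (eventually_gt_atTop 0))).exists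
  obtain ⟨C, hC, small⟩ := hbdd.exists_abs_le_mul_exp hX
  have hfX := hpos X le_rfl
  refine ⟨Real.exp 1 * (1 + C / f X), |κ| + (1 + |ρ|), ?_⟩
  filter_upwards [eventually_ge_atTop X] with x hx y hy
  have hfx := hpos x hx
  rcases le_total X y with hXy | hyX
  · rw [abs_of_pos (hpos y hXy)]
    refine (large x hx y hXy).trans ?_
    gcongr ?_ * Real.exp (?_ * |Real.log (y / x)|) * f x
    · exact le_mul_of_one_le_right (Real.exp_nonneg 1) (le_add_of_nonneg_right (by positivity))
    · exact le_add_of_nonneg_left (abs_nonneg κ)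
  · have log_mono := abs_log_div_le_abs_log_div hy le_rfl hyX hx
    have at_X : f X ≤ Real.exp 1 * Real.exp ((1 + |ρ|) * |Real.log (y / x)|) * f x := by
      refine (large x hx X le_rfl).trans ?_
      gcongr Real.exp 1 * Real.exp ((1 + |ρ|) * ?_) * f x
      exact abs_log_div_le_abs_log_div hy hyX hx le_rfl
    calc |f y| ≤ C * Real.exp (|κ| * |Real.log (y / X)|) := small y ⟨hy, hyX⟩
      _ = C / f X * Real.exp (|κ| * |Real.log (y / X)|) * f X := by field_simp
      _ ≤ C / f X * Real.exp (|κ| * |Real.log (y / x)|)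
          * (Real.exp 1 * Real.exp ((1 + |ρ|) * |Real.log (y / x)|) * f x) :=
        mul_le_mul (by gcongr) at_X hfX.le (by positivity)
      _ = Real.exp 1 * (C / f X) * Real.exp ((|κ| + (1 + |ρ|)) * |Real.log (y / x)|) * f x := by
        rw [add_mul |κ|, Real.exp_add]
        ring
      _ ≤ _ := by
        gcongr
        linarith

end RegularVariation
section GammaLaw

open ProbabilityTheory

variable {E : Type*} [NormedAddCommGroup E] [NormedSpace ℝ E] {a r : ℝ}

theorem gammaMeasure_absolutelyContinuous (a r : ℝ) :
    gammaMeasure a r ≪ volume.restrict (Ioi 0) := by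
  have density_eq : gammaPDF a r =ᵐ[volume] (Ioi 0).indicator (gammaPDF a r) := by
    filter_upwards [Measure.ae_ne volume 0] with x hx
    rcases hx.lt_or_gt with hx | hx
    · rw [gammaPDF_of_neg hx, indicator_of_notMem (notMem_Ioi.2 hx.le)]
    · rw [indicator_of_mem (mem_Ioi.2 hx)]
  rw [gammaMeasure, withDensity_congr_ae density_eq, withDensity_indicator measurableSet_Ioi]
  exact withDensity_absolutelyContinuous _ _

theorem measurable_gammaPDF (a r : ℝ) : Measurable (gammaPDF a r) :=
  (measurable_gammaPDFReal a r).ennreal_ofReal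

theorem toReal_gammaPDF_smul_eq_indicator (ha : 0 < a) (hr : 0 < r) (f : ℝ → E) :
    (fun x => (gammaPDF a r x).toReal • f x) =ᵐ[volume] (Ioi 0).indicator fun x =>
      (r / Real.Gamma a) • ((r * x) ^ (a - 1) * Real.exp (-(r * x))) • f (r * x / r) := by
  filter_upwards [Measure.ae_ne volume 0] with x hx
  rw [gammaPDF, ENNReal.toReal_ofReal (gammaPDFReal_nonneg ha hr x), gammaPDFReal]
  rcases hx.lt_or_gt with hx | hx
  · rw [if_neg hx.not_ge, zero_smul, indicator_of_notMem (notMem_Ioi.2 hx.le)]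
  · rw [if_pos hx.le, indicator_of_mem (mem_Ioi.2 hx), mul_div_cancel_left₀ x hr.ne',
      Real.mul_rpow hr.le hx.le, Real.rpow_sub_one hr.ne', smul_smul]
    congr 1
    field_simp

theorem integrable_gammaMeasure_iff (ha : 0 < a) (hr : 0 < r) {f : ℝ → E} :
    Integrable f (gammaMeasure a r) ↔
      IntegrableOn (fun y => (y ^ (a - 1) * Real.exp (-y)) • f (y / r)) (Ioi 0) := by
  rw [gammaMeasure, integrable_withDensity_iff_integrable_smul'
    (measurable_gammaPDF a r) (by simp [gammaPDF]),
    integrable_congr (toReal_gammaPDF_smul_eq_indicator ha hr f),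
    integrable_indicator_iff measurableSet_Ioi, IntegrableOn,
    integrable_fun_smul_iff (div_pos hr (Real.Gamma_pos_of_pos ha)).ne', ← IntegrableOn,
    integrableOn_Ioi_comp_mul_left_iff (fun y => (y ^ (a - 1) * Real.exp (-y)) • f (y / r)) 0 hr,
    mul_zero]

theorem integral_gammaMeasure (ha : 0 < a) (hr : 0 < r) (f : ℝ → E) :
    ∫ x, f x ∂gammaMeasure a r =
      (Real.Gamma a)⁻¹ • ∫ y in Ioi 0, (y ^ (a - 1) * Real.exp (-y)) • f (y / r) := by
  rw [gammaMeasure, integral_withDensity_eq_integral_toReal_smul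
    (measurable_gammaPDF a r) (by simp [gammaPDF]),
    integral_congr_ae (toReal_gammaPDF_smul_eq_indicator ha hr f),
    integral_indicator measurableSet_Ioi, integral_smul,
    integral_comp_mul_left_Ioi (fun y => (y ^ (a - 1) * Real.exp (-y)) • f (y / r)) 0 hr,
    mul_zero, smul_smul, div_mul_eq_mul_div, mul_inv_cancel₀ hr.ne', one_div]

theorem rpow_sub_one_mul_exp_smul_div_rpow {y : ℝ} (hy : 0 < y) (hr : 0 < r) (s : ℝ) :
    (y ^ (a - 1) * Real.exp (-y)) • (y / r) ^ s
      = (r ^ s)⁻¹ * (Real.exp (-y) * y ^ (a + s - 1)) := by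
  rw [Real.div_rpow hy.le hr.le, add_sub_right_comm, Real.rpow_add hy, smul_eq_mul]
  ring

theorem integrable_rpow_gammaMeasure (ha : 0 < a) (hr : 0 < r) {s : ℝ} (has : 0 < a + s) :
    Integrable (fun x => x ^ s) (gammaMeasure a r) := by
  rw [integrable_gammaMeasure_iff ha hr]
  exact IntegrableOn.congr_fun ((Real.GammaIntegral_convergent has).const_mul _)
    (fun y hy => (rpow_sub_one_mul_exp_smul_div_rpow hy hr s).symm) measurableSet_Ioi

theorem integral_rpow_gammaMeasure (ha : 0 < a) (hr : 0 < r) {s : ℝ} (has : 0 < a + s) :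
    ∫ x, x ^ s ∂gammaMeasure a r = Real.Gamma (a + s) / (Real.Gamma a * r ^ s) := by
  rw [integral_gammaMeasure ha hr, setIntegral_congr_fun measurableSet_Ioi (fun y hy =>
    rpow_sub_one_mul_exp_smul_div_rpow hy hr s), integral_const_mul,
    ← Real.Gamma_eq_integral has, smul_eq_mul, div_eq_inv_mul, mul_inv, mul_assoc]

theorem tendsto_add_const_div_self (c : ℝ) : Tendsto (fun q : ℝ => (q + c) / q) atTop (𝓝 1) := by
  have lim := (tendsto_const_nhds (x := c)).div_atTop tendsto_id |>.const_add (1 : ℝ)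
  rw [add_zero] at lim
  refine lim.congr' ?_
  filter_upwards [eventually_ne_atTop 0] with q hq
  rw [add_div, div_self hq, id_eq]

theorem Gamma_add_add_one_div {q c : ℝ} (hq : q ≠ 0) (hqc : q + c ≠ 0) (k : ℤ) :
    Real.Gamma (q + c + 1) / (Real.Gamma q * q ^ (k + 1))
      = Real.Gamma (q + c) / (Real.Gamma q * q ^ k) * ((q + c) / q) := by
  rw [Real.Gamma_add_one hqc, zpow_add_one₀ hq, ← mul_assoc, mul_comm (q + c), mul_div_mul_comm]

theorem tendsto_Gamma_add_intCast_div (k : ℤ) :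
    Tendsto (fun q : ℝ => Real.Gamma (q + k) / (Real.Gamma q * q ^ k)) atTop (𝓝 1) := by
  have recurrence (k : ℤ) : ∀ᶠ q : ℝ in atTop,
      Real.Gamma (q + (k + 1 : ℤ)) / (Real.Gamma q * q ^ (k + 1))
        = Real.Gamma (q + k) / (Real.Gamma q * q ^ k) * ((q + k) / q) := by
    filter_upwards [eventually_ne_atTop 0, eventually_ne_atTop (-(k : ℝ))] with q hq hqk
    push_cast
    rw [← add_assoc, Gamma_add_add_one_div hq (by rwa [Ne, ← eq_neg_iff_add_eq_zero])]
  induction k with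
  | zero =>
    refine tendsto_const_nhds.congr' ?_
    filter_upwards [eventually_gt_atTop 0] with q hq
    simp [(Real.Gamma_pos_of_pos hq).ne']
  | succ k ih =>
    have lim := ih.mul (tendsto_add_const_div_self k)
    rw [one_mul] at lim
    exact lim.congr' ((recurrence k).mono fun _ h => h.symm)
  | pred k ih =>
    have lim := ih.div (tendsto_add_const_div_self (-k - 1 : ℤ)) one_ne_zero
    rw [div_one] at lim
    refine lim.congr' ?_
    filter_upwards [recurrence (-k - 1), eventually_gt_atTop 0,
      eventually_ne_atTop (-((-k - 1 : ℤ) : ℝ))] with q hq hq0 hqk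
    rw [sub_add_cancel] at hq
    rw [Pi.div_apply, hq, mul_div_cancel_right₀]
    exact div_ne_zero (by rwa [Ne, ← eq_neg_iff_add_eq_zero]) hq0.ne'

theorem eventually_integrable_zpow_gammaMeasure (k : ℤ) :
    ∀ᶠ q : ℝ in atTop, Integrable (fun v => v ^ k) (gammaMeasure q q) := by
  filter_upwards [eventually_gt_atTop 0, eventually_gt_atTop (-(k : ℝ))] with q hq hqk
  simpa only [Real.rpow_intCast] using
    integrable_rpow_gammaMeasure hq hq (neg_lt_iff_pos_add.1 hqk)

theorem tendsto_integral_zpow_gammaMeasure (k : ℤ) :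
    Tendsto (fun q : ℝ => ∫ v, v ^ k ∂gammaMeasure q q) atTop (𝓝 1) := by
  refine (tendsto_Gamma_add_intCast_div k).congr' ?_
  filter_upwards [eventually_gt_atTop 0, eventually_gt_atTop (-(k : ℝ))] with q hq hqk
  simpa only [Real.rpow_intCast] using
    (integral_rpow_gammaMeasure hq hq (neg_lt_iff_pos_add.1 hqk)).symm

theorem ae_pos_gammaMeasure (a r : ℝ) : ∀ᵐ v ∂gammaMeasure a r, 0 < v :=
  gammaMeasure_absolutelyContinuous a r (ae_restrict_mem measurableSet_Ioi)

theorem sub_one_sq_mul_zpow_ae_eq (a r : ℝ) (k : ℤ) :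
    (fun v : ℝ => (v - 1) ^ 2 * v ^ k) =ᵐ[gammaMeasure a r]
      fun v => v ^ (k + 2) - 2 * v ^ (k + 1) + v ^ k := by
  filter_upwards [ae_pos_gammaMeasure a r] with v hv
  rw [zpow_add₀ hv.ne', zpow_add_one₀ hv.ne', zpow_ofNat]
  ring

theorem integral_sub_one_sq_mul_zpow_gammaMeasure {k : ℤ}
    (h₂ : Integrable (fun v : ℝ => v ^ (k + 2)) (gammaMeasure a r))
    (h₁ : Integrable (fun v : ℝ => v ^ (k + 1)) (gammaMeasure a r))
    (h₀ : Integrable (fun v : ℝ => v ^ k) (gammaMeasure a r)) :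
    ∫ v, (v - 1) ^ 2 * v ^ k ∂gammaMeasure a r = ∫ v, v ^ (k + 2) ∂gammaMeasure a r
      - 2 * ∫ v, v ^ (k + 1) ∂gammaMeasure a r + ∫ v, v ^ k ∂gammaMeasure a r := by
  rw [integral_congr_ae (sub_one_sq_mul_zpow_ae_eq a r k),
    integral_add (h₂.sub' (h₁.const_mul 2)) h₀,
    integral_sub h₂ (h₁.const_mul 2), integral_const_mul]

theorem eventually_integrable_sub_one_sq_mul_zpow_gammaMeasure (k : ℤ) :
    ∀ᶠ q : ℝ in atTop, Integrable (fun v => (v - 1) ^ 2 * v ^ k) (gammaMeasure q q) := by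
  filter_upwards [eventually_integrable_zpow_gammaMeasure (k + 2),
    eventually_integrable_zpow_gammaMeasure (k + 1), eventually_integrable_zpow_gammaMeasure k]
    with q h₂ h₁ h₀
  rw [integrable_congr (sub_one_sq_mul_zpow_ae_eq q q k)]
  exact (h₂.sub (h₁.const_mul 2)).add h₀

theorem tendsto_integral_sub_one_sq_mul_zpow_gammaMeasure (k : ℤ) :
    Tendsto (fun q : ℝ => ∫ v, (v - 1) ^ 2 * v ^ k ∂gammaMeasure q q) atTop (𝓝 0) := by
  have lim := ((tendsto_integral_zpow_gammaMeasure (k + 2)).sub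
    ((tendsto_integral_zpow_gammaMeasure (k + 1)).const_mul 2)).add
    (tendsto_integral_zpow_gammaMeasure k)
  rw [show (1 : ℝ) - 2 * 1 + 1 = 0 by norm_num] at lim
  refine lim.congr' ?_
  filter_upwards [eventually_integrable_zpow_gammaMeasure (k + 2),
    eventually_integrable_zpow_gammaMeasure (k + 1), eventually_integrable_zpow_gammaMeasure k]
    with q h₂ h₁ h₀
  exact (integral_sub_one_sq_mul_zpow_gammaMeasure h₂ h₁ h₀).symm

end GammaLaw

section Concentration

open ProbabilityTheory

variable {ι E : Type*} [NormedAddCommGroup E] {l : Filter ι} {R : ι → ℝ → E} {c : E}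

section WeightedDeviation

variable {Ω : Type*} [MeasurableSpace Ω] {W : Ω → ℝ} {ε K : ℝ}

theorem integrable_of_norm_sub_const_le_add_mul {μ : Measure Ω} [IsFiniteMeasure μ] {f : Ω → E}
    (hf : AEStronglyMeasurable f μ) (hW : Integrable W μ)
    (h : ∀ᵐ ω ∂μ, ‖f ω - c‖ ≤ ε + K * W ω) : Integrable f μ :=
  integrable_of_norm_sub_le hf (integrable_const c) ((integrable_const ε).add (hW.const_mul K))
    (h.mono fun ω hω => by rwa [norm_sub_rev])

variable [NormedSpace ℝ E] [CompleteSpace E]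

theorem norm_integral_sub_const_le_add_mul {μ : Measure Ω} [IsProbabilityMeasure μ] {f : Ω → E}
    (hf : AEStronglyMeasurable f μ) (hW : Integrable W μ)
    (h : ∀ᵐ ω ∂μ, ‖f ω - c‖ ≤ ε + K * W ω) : ‖∫ ω, f ω ∂μ - c‖ ≤ ε + K * ∫ ω, W ω ∂μ := by
  have hf_int := integrable_of_norm_sub_const_le_add_mul hf hW h
  calc ‖∫ ω, f ω ∂μ - c‖ = ‖∫ ω, (f ω - c) ∂μ‖ := by
        rw [integral_sub hf_int (integrable_const c), integral_const, probReal_univ, one_smul]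
    _ ≤ ∫ ω, (ε + K * W ω) ∂μ :=
        norm_integral_le_of_norm_le ((integrable_const ε).add (hW.const_mul K)) h
    _ = ε + K * ∫ ω, W ω ∂μ := by
        rw [integral_add (integrable_const ε) (hW.const_mul K), integral_const, probReal_univ,
          one_smul, integral_const_mul]

theorem tendsto_integral_of_norm_sub_const_le_add_mul {μ : ι → Measure Ω} {R : ι → Ω → E}
    (hμ : ∀ᶠ i in l, IsProbabilityMeasure (μ i))
    (hR : ∀ᶠ i in l, AEStronglyMeasurable (R i) (μ i))
    (hW_int : ∀ᶠ i in l, Integrable W (μ i)) (hW : Tendsto (fun i => ∫ ω, W ω ∂μ i) l (𝓝 0))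
    (h : ∀ ε > 0, ∃ K, ∀ᶠ i in l, ∀ᵐ ω ∂μ i, ‖R i ω - c‖ ≤ ε + K * W ω) :
    Tendsto (fun i => ∫ ω, R i ω ∂μ i) l (𝓝 c) := by
  rw [tendsto_iff_norm_sub_tendsto_zero, Metric.tendsto_nhds]
  intro ε hε
  obtain ⟨K, hK⟩ := h (ε / 2) (half_pos hε)
  have hKW : Tendsto (fun i => K * ∫ ω, W ω ∂μ i) l (𝓝 0) := by
    simpa only [mul_zero] using hW.const_mul K
  filter_upwards [hμ, hR, hW_int, hK, hKW.eventually (gt_mem_nhds (half_pos hε))]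
    with i hμi hRi hWi hKi hsmall
  rw [dist_zero_right, norm_norm]
  linarith [norm_integral_sub_const_le_add_mul hRi hWi hKi]

end WeightedDeviation

theorem exp_mul_abs_log_le_zpow_add_zpow_neg {a v : ℝ} (hv : 0 < v) {N : ℕ} (haN : a ≤ N) :
    Real.exp (a * |Real.log v|) ≤ v ^ (N : ℤ) + v ^ (-N : ℤ) := by
  refine (Real.exp_le_exp.2 (mul_le_mul_of_nonneg_right haN (abs_nonneg _))).trans ?_
  rw [Real.exp_nat_mul, zpow_neg, zpow_natCast]
  rcases abs_choice (Real.log v) with h | h <;> rw [h]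
  · rw [Real.exp_log hv]
    exact le_add_of_nonneg_right (by positivity)
  · rw [Real.exp_neg, Real.exp_log hv, inv_pow]
    exact le_add_of_nonneg_left (by positivity)

theorem exists_norm_sub_const_le_add_mul_sub_one_sq {C a ε : ℝ} {N : ℕ} (haN : a ≤ N)
    (hbdd : ∀ᶠ i in l, ∀ v, 0 < v → ‖R i v‖ ≤ C * Real.exp (a * |Real.log v|))
    (hlim : Tendsto (fun p : ι × ℝ => R p.1 p.2) (l ×ˢ 𝓝 1) (𝓝 c)) (hε : 0 < ε) :
    ∃ K, ∀ᶠ i in l, ∀ v, 0 < v → ‖R i v - c‖ ≤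
      ε + K * ((v - 1) ^ 2 * v ^ (N : ℤ) + (v - 1) ^ 2 * v ^ (-N : ℤ)) := by
  obtain ⟨p, hp, s, hs, near⟩ := eventually_prod_iff.1 (Metric.tendsto_nhds.1 hlim ε hε)
  obtain ⟨δ, hδ, hδs⟩ := Metric.eventually_nhds_iff.1 hs
  refine ⟨(|C| + ‖c‖) / δ ^ 2, ?_⟩
  filter_upwards [hbdd, hp] with i hRi hpi v hv
  rw [← mul_add]
  have one_le := exp_mul_abs_log_le_zpow_add_zpow_neg hv N.cast_nonneg
  have exp_le := exp_mul_abs_log_le_zpow_add_zpow_neg hv haN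
  rw [zero_mul, Real.exp_zero] at one_le
  set M := v ^ (N : ℤ) + v ^ (-N : ℤ)
  rcases lt_or_ge (dist v 1) δ with hvδ | hvδ
  · have := near hpi (hδs hvδ)
    rw [dist_eq_norm] at this
    exact this.le.trans (le_add_of_nonneg_right (by positivity))
  · have sq_le : δ ^ 2 ≤ (v - 1) ^ 2 := by
      rw [← sq_abs (v - 1)]
      exact pow_le_pow_left₀ hδ.le hvδ 2
    calc ‖R i v - c‖ ≤ ‖R i v‖ + ‖c‖ := norm_sub_le _ _
      _ ≤ |C| * M + ‖c‖ * M := by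
        refine add_le_add ((hRi v hv).trans ?_) (le_mul_of_one_le_right (norm_nonneg c) one_le)
        gcongr
        exact le_abs_self C
      _ = (|C| + ‖c‖) / δ ^ 2 * (δ ^ 2 * M) := by field_simp
      _ ≤ (|C| + ‖c‖) / δ ^ 2 * ((v - 1) ^ 2 * M) := by gcongr
      _ ≤ _ := le_add_of_nonneg_left hε.le

theorem eventually_integrable_and_tendsto_integral_gammaMeasure [NormedSpace ℝ E]
    [CompleteSpace E] {q : ι → ℝ} {C a : ℝ} (hq : Tendsto q l atTop)
    (hR : ∀ᶠ i in l, AEStronglyMeasurable (R i) (volume.restrict (Ioi 0)))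
    (hbdd : ∀ᶠ i in l, ∀ v, 0 < v → ‖R i v‖ ≤ C * Real.exp (a * |Real.log v|))
    (hlim : Tendsto (fun p : ι × ℝ => R p.1 p.2) (l ×ˢ 𝓝 1) (𝓝 c)) :
    (∀ᶠ i in l, Integrable (R i) (gammaMeasure (q i) (q i))) ∧
      Tendsto (fun i => ∫ v, R i v ∂gammaMeasure (q i) (q i)) l (𝓝 c) := by
  obtain ⟨N, haN⟩ := exists_nat_ge a
  have isProbability : ∀ᶠ i in l, IsProbabilityMeasure (gammaMeasure (q i) (q i)) :=
    (hq.eventually_gt_atTop 0).mono fun i hi => isProbabilityMeasure_gammaMeasure hi hi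
  have measurable : ∀ᶠ i in l, AEStronglyMeasurable (R i) (gammaMeasure (q i) (q i)) :=
    hR.mono fun i hi => hi.mono_ac (gammaMeasure_absolutelyContinuous _ _)
  have weight_integrable (k : ℤ) :=
    hq.eventually (eventually_integrable_sub_one_sq_mul_zpow_gammaMeasure k)
  have weight_tendsto : Tendsto (fun i => ∫ v, (v - 1) ^ 2 * v ^ (N : ℤ)
      + (v - 1) ^ 2 * v ^ (-N : ℤ) ∂gammaMeasure (q i) (q i)) l (𝓝 0) := by
    have lim (k : ℤ) := (tendsto_integral_sub_one_sq_mul_zpow_gammaMeasure k).comp hq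
    have lim_add := (lim N).add (lim (-N))
    rw [add_zero] at lim_add
    refine lim_add.congr' ?_
    filter_upwards [weight_integrable N, weight_integrable (-N)] with i h₁ h₂
    exact (integral_add h₁ h₂).symm
  have dominated (ε : ℝ) (hε : 0 < ε) : ∃ K, ∀ᶠ i in l, ∀ᵐ v ∂gammaMeasure (q i) (q i),
      ‖R i v - c‖ ≤ ε + K * ((v - 1) ^ 2 * v ^ (N : ℤ) + (v - 1) ^ 2 * v ^ (-N : ℤ)) := by
    obtain ⟨K, hK⟩ := exists_norm_sub_const_le_add_mul_sub_one_sq haN hbdd hlim hε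
    exact ⟨K, hK.mono fun i hi => (ae_pos_gammaMeasure _ _).mono hi⟩
  have integrable_weight := (weight_integrable N).and (weight_integrable (-N))
  constructor
  · obtain ⟨K, hK⟩ := dominated 1 one_pos
    filter_upwards [isProbability, measurable, integrable_weight, hK] with i _ hRi hWi hKi
    exact integrable_of_norm_sub_const_le_add_mul hRi (hWi.1.add hWi.2) hKi
  · exact tendsto_integral_of_norm_sub_const_le_add_mul isProbability measurable
      (integrable_weight.mono fun i hi => hi.1.add hi.2) weight_tendsto dominated

end Concentration

section Main

open ProbabilityTheory

variable {U : ℝ → ℝ} {β κ : ℝ}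

theorem aestronglyMeasurable_comp_const_div (hm : Measurable fun x : Ioi (0 : ℝ) => U x) {s : ℝ}
    (hs : 0 < s) : AEStronglyMeasurable (fun v => U (s / v)) (volume.restrict (Ioi 0)) := by
  have measurable : Measurable fun v => U (Real.exp (Real.log (s / v))) :=
    (measurable_comp_exp hm).comp (Real.measurable_log.comp (measurable_id.const_div s))
  refine measurable.aestronglyMeasurable.congr ?_
  filter_upwards [ae_restrict_mem measurableSet_Ioi] with v hv
  rw [Real.exp_log (div_pos hs hv)]

theorem RegularlyVaryingAtTop.exists_norm_ratio_div_le (hU : RegularlyVaryingAtTop U β)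
    (hm : Measurable fun x : Ioi (0 : ℝ) => U x)
    (hbdd : LocallyBoundedFromZero fun x => x ^ κ * U x) :
    ∃ C a, ∀ᶠ s in atTop, ∀ v, 0 < v → ‖U (s / v) / U s‖ ≤ C * Real.exp (a * |Real.log v|) := by
  obtain ⟨C, a, h⟩ := hU.exists_abs_le_mul_exp_mul hm hbdd
  refine ⟨C, a, ?_⟩
  filter_upwards [h, hU.eventually_pos, eventually_gt_atTop 0] with s hs hUs hs0 v hv
  rw [Real.norm_eq_abs, abs_div, abs_of_pos hUs, div_le_iff₀ hUs]
  simpa only [div_div_cancel_left' hs0.ne', Real.log_inv, abs_neg] using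
    hs (s / v) (div_pos hs0 hv)

theorem RegularlyVaryingAtTop.tendsto_ratio_div_prod_one (hU : RegularlyVaryingAtTop U β)
    (hm : Measurable fun x : Ioi (0 : ℝ) => U x) :
    Tendsto (fun p : ℝ × ℝ => U (p.1 / p.2) / U p.1) (atTop ×ˢ 𝓝 1) (𝓝 1) := by
  have inv_map : Tendsto (fun p : ℝ × ℝ => (p.1, p.2⁻¹)) (atTop ×ˢ 𝓝 1) (atTop ×ˢ 𝓝 1) := by
    refine tendsto_id.prodMap ?_
    simpa only [inv_one] using tendsto_inv₀ (one_ne_zero (α := ℝ))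
  have lim := (hU.tendsto_ratio_prod hm one_pos).comp inv_map
  rw [Real.one_rpow] at lim
  exact lim.congr fun p => by simp only [Function.comp_apply, div_eq_inv_mul]

theorem gamma_kernel_smul_ratio {q t y : ℝ} (hq : 0 < q) :
    (y ^ (q - 1) * Real.exp (-y)) • (U (t / q / (y / q)) / U (t / q))
      = y ^ (q - 1) * Real.exp (-y) * U (t / y) / U (t / q) := by
  rw [div_div_div_cancel_right₀ hq.ne', smul_eq_mul, mul_div_assoc]

theorem stmt_1_general {ι : Type*} {l : Filter ι} {t q : ι → ℝ} (hU : RegularlyVaryingAtTop U β)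
    (hm : Measurable fun x : Ioi (0 : ℝ) => U x)
    (hbdd : LocallyBoundedFromZero fun x => x ^ κ * U x) (hq : Tendsto q l atTop)
    (ht : Tendsto (fun i => t i / q i) l atTop) :
    (∀ᶠ i in l,
      IntegrableOn (fun y => y ^ (q i - 1) * Real.exp (-y) * U (t i / y)) (Ioi 0)) ∧
    Tendsto (fun i => (∫ y in Ioi 0, y ^ (q i - 1) * Real.exp (-y) * U (t i / y)) /
      (Real.Gamma (q i) * U (t i / q i))) l (𝓝 1) := by
  obtain ⟨C, a, bound⟩ := hU.exists_norm_ratio_div_le hm hbdd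
  have measurable : ∀ᶠ i in l, AEStronglyMeasurable
      (fun v => U (t i / q i / v) / U (t i / q i)) (volume.restrict (Ioi 0)) :=
    (ht.eventually_gt_atTop 0).mono fun i hi => by
      simpa only [div_eq_mul_inv _ (U _)] using
        (aestronglyMeasurable_comp_const_div hm hi).mul_const (U (t i / q i))⁻¹
  obtain ⟨integrable, lim⟩ := eventually_integrable_and_tendsto_integral_gammaMeasure hq measurable
    (ht.eventually bound) ((hU.tendsto_ratio_div_prod_one hm).comp (ht.prodMap tendsto_id))
  have hq0 := hq.eventually_gt_atTop 0
  constructor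
  · filter_upwards [integrable, hq0, ht.eventually hU.eventually_pos] with i hi hqi hUi
    rw [integrable_gammaMeasure_iff hqi hqi] at hi
    simp only [gamma_kernel_smul_ratio hqi] at hi
    simpa only [IntegrableOn, div_mul_cancel₀ _ hUi.ne'] using hi.mul_const (U (t i / q i))
  · refine lim.congr' (hq0.mono fun i hqi => ?_)
    simp only [integral_gammaMeasure hqi hqi, gamma_kernel_smul_ratio hqi, integral_div]
    rw [smul_eq_mul, inv_mul_eq_div, div_div, mul_comm (U _)]

theorem ClassQ.tendsto_div_self_atTop {q : ℝ → ℝ} (hq : ClassQ q) :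
    Tendsto (fun t => t / q t) atTop atTop := by
  have pos : ∀ᶠ t in atTop, q t / t ∈ Ioi (0 : ℝ) := by
    filter_upwards [hq.eventually_pos, eventually_gt_atTop 0] with t hqt ht
    exact div_pos hqt ht
  refine (tendsto_nhdsWithin_iff.2 ⟨hq.tendsto_div, pos⟩).inv_tendsto_nhdsGT_zero.congr fun t => ?_
  rw [Pi.inv_apply, inv_div]

end Main

/-- Abelian theorem for a regularly varying `U` with diverging exponent `q(t)`. Local boundedness
is required of `x ↦ x ^ κ * U x` for some real `κ`; `κ = 0` is local boundedness of `U` itself and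
`κ = -β` is local boundedness of the slowly varying factor of `U`. -/
theorem stmt_1
    (U ℓ q : ℝ → ℝ) (β κ : ℝ)
    (hU_pos : ∀ x : ℝ, 0 < x → 0 < U x)
    (hU_meas : Measurable (fun x : Ioi (0 : ℝ) => U x))
    (hU_bdd : LocallyBoundedFromZero (fun x => x ^ κ * U x))
    (hℓ : SlowlyVaryingAtTop ℓ)
    (hU_equiv : Tendsto (fun x => U x / (x ^ β * ℓ x)) atTop (𝓝 1))
    (hq : ClassQ q) :
    (∀ᶠ t in atTop,
      IntegrableOn (fun y => y ^ (q t - 1) * Real.exp (-y) * U (t / y)) (Ioi (0 : ℝ))) ∧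
    Tendsto (fun t =>
      (∫ y in Ioi (0 : ℝ), y ^ (q t - 1) * Real.exp (-y) * U (t / y)) /
        (Real.Gamma (q t) * U (t / q t))) atTop (𝓝 1) :=
  stmt_1_general (hℓ.regularlyVaryingAtTop_of_tendsto_div hU_equiv) hU_meas hU_bdd
    hq.tendsto_atTop hq.tendsto_div_self_atTop
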